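/- arXiv:1609.02068 — 2 statements merged into one kernel-verified Lean document; each statement's English description precedes it below -/
import Mathlib

section
/- Let d ≥ 2. There is a constant C, depending only on d, with the following property. Let ρ > 0, let Ψ be a C² function on the closure of the cube C_ρ^{(d−1)} = (−2ρ,2ρ)^{d−1} with values in (−2ρ,2ρ), and fix l ∈ {1,…,d}. Define ρ₀(ξ°) = min_j ρ_j(ξ°) if X_l(ξ°) is nonempty and finite, ρ₀(ξ°) = 0 if X_l(ξ°) is infinite, and ρ₀(ξ°) = 4ρ if X_l(ξ°) = ∅, and for ε ∈ (0, 4ρ) set M_ε = {ξ° ∈ C_ρ^{(d−1)} : ρ₀(ξ°) < ε}. Then the Lebesgue measure of M_ε satisfies |M_ε| ≤ C · ε · ρ^{d−2} · (1 + ρ·‖∇²Ψ‖_{L^∞}). -/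
open MeasureTheory Set
open scoped Classical

/-- The open cube `(−2ρ, 2ρ)^n`. -/
def cube (n : ℕ) (ρ : ℝ) : Set (Fin n → ℝ) :=
  Set.univ.pi fun _ => Set.Ioo (-(2 * ρ)) (2 * ρ)

/-- The graph surface `S = {ξ ∈ (−2ρ,2ρ)^{n+1} : ξ_d = Ψ(ξ̂)}` of `Ψ`. -/
def graphSurface (n : ℕ) (ρ : ℝ) (Ψ : (Fin n → ℝ) → ℝ) : Set (Fin (n + 1) → ℝ) :=
  {ξ | (∀ i, ξ i ∈ Set.Ioo (-(2 * ρ)) (2 * ρ)) ∧ ξ (Fin.last n) = Ψ (Fin.init ξ)}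

/-- `X_l(ξ°) = {t ∈ (−2ρ,2ρ) : the point with `t` inserted as `l`-th coordinate of `ξ°`
lies on the surface `S`}`. -/
def Xset (n : ℕ) (ρ : ℝ) (Ψ : (Fin n → ℝ) → ℝ) (l : Fin (n + 1)) (ξ : Fin n → ℝ) :
    Set ℝ :=
  {t | t ∈ Set.Ioo (-(2 * ρ)) (2 * ρ) ∧ l.insertNth t ξ ∈ graphSurface n ρ Ψ}

/-- `ρ₀(ξ°) = min_j ρ_j(ξ°)` (with `ρ_j = dist(ξ^{(j)}, X∖{ξ^{(j)}})`) if `X` is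
nonempty and finite with at least two points, `4ρ` if `X` is empty or a singleton,
and `0` if `X` is infinite. -/
noncomputable def rho0 (ρ : ℝ) (X : Set ℝ) : ℝ :=
  if X.Subsingleton then 4 * ρ
  else if X.Finite then sInf ((fun x => Metric.infDist x (X \ {x})) '' X)
  else 0

/-!
If `ρ₀(ξ°) < ε`, two points of `S` on the line `ξ° + ℝ e_l` are less than `ε` apart. This is
impossible for `l = d`. For `l < d` the coordinate `ξ_d` is constant on the line, so `Ψ` takes the
same value at the projections of these points to `ξ̂`-space. By the mean value theorem `∂_l Ψ`
vanishes between the projections, and if `∇Ψ` is `K`-Lipschitz then `|∂_l Ψ| ≤ K ε` at the first of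
them. Hence `M_ε` lies in the image of `{|∂_l Ψ| ≤ K ε}` under the map `ξ̂ ↦ ξ°` that parametrizes
the projection of `S` along `e_l`. The Jacobian determinant of this map is `± ∂_l Ψ`, so the image
has measure at most `K ε |C_ρ|`.
-/

open scoped NNReal

lemma exists_ne_dist_lt_of_infinite {α : Type*} [PseudoMetricSpace α] {s : Set α}
    (hs : s.Infinite) (hs' : TotallyBounded s) {ε : ℝ} (hε : 0 < ε) :
    ∃ a ∈ s, ∃ b ∈ s, a ≠ b ∧ dist a b < ε := by
  obtain ⟨t, ht, hst⟩ := Metric.totallyBounded_iff.1 hs' (ε / 2) (half_pos hε)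
  have hcenter : ∀ x ∈ s, ∃ y ∈ t, dist x y < ε / 2 := fun x hx => by simpa using hst hx
  choose! c hct hc using hcenter
  obtain ⟨a, ha, b, hb, hab, hcab⟩ := hs.exists_ne_map_eq_of_mapsTo hct ht
  refine ⟨a, ha, b, hb, hab, ?_⟩
  calc dist a b ≤ dist a (c a) + dist b (c a) := dist_triangle_right ..
    _ < ε / 2 + ε / 2 := add_lt_add (hc a ha) (hcab ▸ hc b hb)
    _ = ε := add_halves ε

lemma exists_ne_dist_lt_of_rho0_lt {ρ ε : ℝ} {X : Set ℝ} (hX : TotallyBounded X)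
    (hε : ε ≤ 4 * ρ) (h : rho0 ρ X < ε) : ∃ a ∈ X, ∃ b ∈ X, a ≠ b ∧ dist a b < ε := by
  unfold rho0 at h
  split_ifs at h with hsub hfin
  · exact absurd hε h.not_ge
  · have hnt := not_subsingleton_iff.1 hsub
    obtain ⟨_, ⟨a, ha, rfl⟩, hlt⟩ := exists_lt_of_csInf_lt (hnt.nonempty.image _) h
    obtain ⟨b, ⟨hb, hba⟩, hdist⟩ := (Metric.infDist_lt_iff (hnt.exists_ne a)).1 hlt
    exact ⟨a, ha, b, hb, Ne.symm hba, hdist⟩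
  · exact exists_ne_dist_lt_of_infinite hfin hX h

section Calculus

lemma lipschitzOnWith_fderivWithin_of_norm_iteratedFDerivWithin_le {E F : Type*}
    [NormedAddCommGroup E] [NormedSpace ℝ E] [NormedAddCommGroup F] [NormedSpace ℝ F]
    {f : E → F} {s : Set E} {K : ℝ≥0} (hs : Convex ℝ s) (hs' : UniqueDiffOn ℝ s)
    (hf : ContDiffOn ℝ 2 f s) (hK : ∀ x ∈ s, ‖iteratedFDerivWithin ℝ 2 f s x‖ ≤ K) :
    LipschitzOnWith K (fderivWithin ℝ f s) s := by
  refine hs.lipschitzOnWith_of_nnnorm_fderivWithin_le (𝕜 := ℝ)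
    ((hf.fderivWithin (m := 1) hs' (by norm_num)).differentiableOn one_ne_zero) fun x hx => ?_
  rw [← NNReal.coe_le_coe, coe_nnnorm, ← norm_iteratedFDerivWithin_one _ (hs' x hx),
    norm_iteratedFDerivWithin_fderivWithin hs' hx]
  exact hK x hx

lemma abs_fderiv_apply_sub_le_of_eq {E : Type*} [NormedAddCommGroup E] [NormedSpace ℝ E]
    {f : E → ℝ} {f' : E → E →L[ℝ] ℝ} {s : Set E} {K : ℝ≥0} (hs : Convex ℝ s)
    (hf : ∀ x ∈ s, HasFDerivWithinAt f (f' x) s x) (hK : LipschitzOnWith K f' s)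
    {x y : E} (hx : x ∈ s) (hy : y ∈ s) (hxy : f x = f y) :
    |f' x (y - x)| ≤ K * ‖y - x‖ ^ 2 := by
  obtain ⟨z, hz, hzero⟩ := domain_mvt hf hs hx hy
  rw [hxy, sub_self] at hzero
  have hxz : dist x z ≤ ‖y - x‖ := by
    rw [dist_comm, dist_eq_norm]
    exact norm_sub_le_of_mem_segment hz
  calc |f' x (y - x)| = ‖(f' x - f' z) (y - x)‖ := by simp [← hzero]
    _ ≤ dist (f' x) (f' z) * ‖y - x‖ := dist_eq_norm (f' x) (f' z) ▸ (f' x - f' z).le_opNorm _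
    _ ≤ K * dist x z * ‖y - x‖ := by
      gcongr
      exact hK.dist_le_mul x hx z (hs.segment_subset hx hy hz)
    _ ≤ K * ‖y - x‖ * ‖y - x‖ := by gcongr
    _ = K * ‖y - x‖ ^ 2 := by ring

end Calculus

section UpdateMap

variable {ι : Type*} [DecidableEq ι]

lemma det_pi_update_proj [Finite ι] {R : Type*} [CommRing R] (k : ι) (L : (ι → R) →ₗ[R] R) :
    LinearMap.det (LinearMap.pi (Function.update LinearMap.proj k L)) = L (Pi.single k 1) := by
  cases nonempty_fintype ι
  have hmatrix : LinearMap.toMatrix' (LinearMap.pi (Function.update LinearMap.proj k L)) =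
      (1 : Matrix ι ι R).updateRow k fun j => L (Pi.single j 1) := by
    ext i j
    obtain rfl | hi := eq_or_ne i k
    · simp [LinearMap.toMatrix'_apply]
    · simp [LinearMap.toMatrix'_apply, hi, Matrix.one_apply, Pi.single_apply]
  rw [← LinearMap.det_toMatrix', hmatrix, ← Matrix.cramer_transpose_apply,
    Matrix.transpose_one, Matrix.cramer_one, Module.End.one_apply]

lemma hasFDerivWithinAt_update_self [Finite ι] {𝕜 : Type*} [NontriviallyNormedField 𝕜] (k : ι)
    {f : (ι → 𝕜) → 𝕜} {f' : (ι → 𝕜) →L[𝕜] 𝕜} {s : Set (ι → 𝕜)} {x : ι → 𝕜}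
    (hf : HasFDerivWithinAt f f' s x) :
    HasFDerivWithinAt (fun x => Function.update x k (f x))
      (ContinuousLinearMap.pi (Function.update ContinuousLinearMap.proj k f')) s x := by
  cases nonempty_fintype ι
  rw [hasFDerivWithinAt_pi]
  intro i
  obtain rfl | hi := eq_or_ne i k
  · simpa using hf
  · simpa [hi] using hasFDerivWithinAt_apply i x s

lemma volume_image_update_self_le [Fintype ι] (k : ι) {f : (ι → ℝ) → ℝ}
    {f' : (ι → ℝ) → (ι → ℝ) →L[ℝ] ℝ} {s : Set (ι → ℝ)} (hs : MeasurableSet s)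
    (hf : ∀ x ∈ s, HasFDerivWithinAt f (f' x) s x) :
    volume ((fun x => Function.update x k (f x)) '' s) ≤
      ∫⁻ x in s, ENNReal.ofReal |f' x (Pi.single k 1)| := by
  have hcoe (x : ι → ℝ) : (ContinuousLinearMap.pi
      (Function.update ContinuousLinearMap.proj k (f' x)) : (ι → ℝ) →ₗ[ℝ] ι → ℝ) =
        LinearMap.pi (Function.update LinearMap.proj k (f' x : (ι → ℝ) →ₗ[ℝ] ℝ)) := by
    refine LinearMap.ext fun v => funext fun i => ?_
    obtain rfl | hi := eq_or_ne i k <;> simp [*]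
  have hdet (x : ι → ℝ) : (ContinuousLinearMap.pi
      (Function.update ContinuousLinearMap.proj k (f' x))).det = f' x (Pi.single k 1) :=
    (congrArg LinearMap.det (hcoe x)).trans (det_pi_update_proj k _)
  simpa only [hdet] using addHaar_image_le_lintegral_abs_det_fderiv volume hs
    fun x hx => hasFDerivWithinAt_update_self k (hf x hx)

end UpdateMap

section GraphProj

variable {n : ℕ}

/-- The parametrization `ξ̂ ↦ ξ°` of the projection of the graph of `Ψ` along the `l`-th axis:
`ξ̂` is sent to the point `(ξ̂, Ψ(ξ̂))` with its `l`-th coordinate omitted. -/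
def graphProj (Ψ : (Fin n → ℝ) → ℝ) (l : Fin (n + 1)) (x : Fin n → ℝ) : Fin n → ℝ :=
  l.removeNth (Fin.snoc x (Ψ x) : Fin (n + 1) → ℝ)

/-- The projection `ξ̂` of the point with `l`-th coordinate `t` and remaining coordinates `ξ°`. -/
def basePoint (l : Fin (n + 1)) (ξ : Fin n → ℝ) (t : ℝ) : Fin n → ℝ :=
  Fin.init (l.insertNth t ξ : Fin (n + 1) → ℝ)

lemma exists_perm_succAbove_eq_swap (p q : Fin (n + 1)) :
    ∃ σ : Equiv.Perm (Fin n), ∀ i, p.succAbove (σ i) = Equiv.swap p q (q.succAbove i) := by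
  have hne (i : Fin n) : Equiv.swap p q (q.succAbove i) ≠ p := by
    rw [Ne, Equiv.swap_apply_eq_iff, Equiv.swap_apply_left]
    exact q.succAbove_ne i
  choose σ hσ using fun i => Fin.exists_succAbove_eq (hne i)
  have hinj : Function.Injective σ := fun i j hij =>
    q.succAbove_right_injective <| (Equiv.swap p q).injective <| by rw [← hσ, ← hσ, hij]
  exact ⟨Equiv.ofBijective σ hinj.bijective_of_finite, hσ⟩

lemma exists_perm_graphProj_castSucc (k : Fin n) : ∃ σ : Equiv.Perm (Fin n),
    ∀ Ψ x i, graphProj Ψ k.castSucc x (σ i) = Function.update x k (Ψ x) i := by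
  obtain ⟨σ, hσ⟩ := exists_perm_succAbove_eq_swap k.castSucc (Fin.last n)
  refine ⟨σ, fun Ψ x i => ?_⟩
  rw [graphProj, Fin.removeNth_apply, hσ, Fin.succAbove_last]
  obtain rfl | hi := eq_or_ne i k
  · simp
  · rw [Equiv.swap_apply_of_ne_of_ne (by simpa using hi) (Fin.castSucc_lt_last i).ne]
    simp [hi]

lemma volume_image_graphProj_castSucc (Ψ : (Fin n → ℝ) → ℝ) (k : Fin n) (s : Set (Fin n → ℝ)) :
    volume (graphProj Ψ k.castSucc '' s) =
      volume ((fun x => Function.update x k (Ψ x)) '' s) := by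
  obtain ⟨σ, hσ⟩ := exists_perm_graphProj_castSucc k
  set e := MeasurableEquiv.piCongrLeft (fun _ : Fin n => ℝ) σ
  have he : MeasurePreserving e := volume_measurePreserving_piCongrLeft (fun _ => ℝ) σ
  have hcomp : graphProj Ψ k.castSucc = e ∘ fun x => Function.update x k (Ψ x) := by
    ext x j
    obtain ⟨i, rfl⟩ := σ.surjective j
    rw [hσ, Function.comp_apply, MeasurableEquiv.coe_piCongrLeft, Equiv.piCongrLeft_apply_apply]
  rw [hcomp, image_comp, e.image_eq_preimage_symm, (he.symm e).measure_preimage_equiv]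

lemma basePoint_castSucc_eq_update (k : Fin n) (ξ : Fin n → ℝ) (s t : ℝ) :
    basePoint k.castSucc ξ t = Function.update (basePoint k.castSucc ξ s) k t := by
  rw [basePoint, basePoint, ← Fin.init_update_castSucc, Fin.update_insertNth]

lemma basePoint_castSucc_sub (k : Fin n) (ξ : Fin n → ℝ) (s t : ℝ) :
    basePoint k.castSucc ξ t - basePoint k.castSucc ξ s = Pi.single k (t - s) := by
  rw [basePoint_castSucc_eq_update k ξ s t]
  ext i
  obtain rfl | hi := eq_or_ne i k
  · simp [basePoint, Fin.init]
  · simp [hi]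

variable {ρ : ℝ} {Ψ : (Fin n → ℝ) → ℝ} {l : Fin (n + 1)} {ξ : Fin n → ℝ} {t : ℝ}

lemma basePoint_mem_cube (ht : t ∈ Xset n ρ Ψ l ξ) : basePoint l ξ t ∈ cube n ρ :=
  fun i _ => ht.2.1 i.castSucc

lemma snoc_basePoint (ht : t ∈ Xset n ρ Ψ l ξ) :
    (Fin.snoc (basePoint l ξ t) (Ψ (basePoint l ξ t)) : Fin (n + 1) → ℝ) = l.insertNth t ξ := by
  rw [basePoint, ← ht.2.2, Fin.snoc_init_self]

lemma graphProj_basePoint (ht : t ∈ Xset n ρ Ψ l ξ) : graphProj Ψ l (basePoint l ξ t) = ξ := by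
  rw [graphProj, snoc_basePoint ht, Fin.removeNth_insertNth]

lemma apply_basePoint_castSucc_eq {k : Fin n} {a b : ℝ} (ha : a ∈ Xset n ρ Ψ k.castSucc ξ)
    (hb : b ∈ Xset n ρ Ψ k.castSucc ξ) :
    Ψ (basePoint k.castSucc ξ a) = Ψ (basePoint k.castSucc ξ b) := by
  obtain ⟨j, hj⟩ := Fin.exists_succAbove_eq (Fin.castSucc_lt_last k).ne'
  rw [basePoint, basePoint, ← ha.2.2, ← hb.2.2, ← hj, Fin.insertNth_apply_succAbove,
    Fin.insertNth_apply_succAbove]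

lemma subsingleton_Xset_last : (Xset n ρ Ψ (Fin.last n) ξ).Subsingleton := by
  intro a ha b hb
  have hvalue {t : ℝ} (ht : t ∈ Xset n ρ Ψ (Fin.last n) ξ) : t = Ψ ξ := by
    simpa using ht.2.2
  rw [hvalue ha, hvalue hb]

lemma totallyBounded_Xset : TotallyBounded (Xset n ρ Ψ l ξ) :=
  (totallyBounded_Ioo (-(2 * ρ)) (2 * ρ)).subset fun _ ht => ht.1

end GraphProj

section Measure

variable {n : ℕ}

lemma isOpen_cube (n : ℕ) (ρ : ℝ) : IsOpen (cube n ρ) :=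
  isOpen_set_pi finite_univ fun _ _ => isOpen_Ioo

lemma convex_cube (n : ℕ) (ρ : ℝ) : Convex ℝ (cube n ρ) :=
  convex_pi fun _ _ => convex_Ioo _ _

lemma zero_mem_cube (n : ℕ) {ρ : ℝ} (hρ : 0 < ρ) : 0 ∈ cube n ρ :=
  fun _ _ => by simp [hρ]

lemma uniqueDiffOn_closure_cube (n : ℕ) {ρ : ℝ} (hρ : 0 < ρ) :
    UniqueDiffOn ℝ (closure (cube n ρ)) :=
  uniqueDiffOn_convex (convex_cube n ρ).closure
    ⟨0, (isOpen_cube n ρ).subset_interior_closure (zero_mem_cube n hρ)⟩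

lemma volume_cube (n : ℕ) (ρ : ℝ) : volume (cube n ρ) = ENNReal.ofReal (4 * ρ) ^ n := by
  rw [cube, Real.volume_pi_Ioo, Finset.prod_const, Finset.card_univ, Fintype.card_fin]
  ring_nf

variable {ρ ε : ℝ} {Ψ : (Fin n → ℝ) → ℝ} {Ψ' : (Fin n → ℝ) → (Fin n → ℝ) →L[ℝ] ℝ} {K : ℝ≥0}

lemma setOf_rho0_lt_subset_image_graphProj
    (hΨ : ∀ x ∈ cube n ρ, HasFDerivWithinAt Ψ (Ψ' x) (cube n ρ) x)
    (hK : LipschitzOnWith K Ψ' (cube n ρ)) (k : Fin n) (hε : ε ≤ 4 * ρ) :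
    {ξ | rho0 ρ (Xset n ρ Ψ k.castSucc ξ) < ε} ⊆
      graphProj Ψ k.castSucc '' {x ∈ cube n ρ | |Ψ' x (Pi.single k 1)| ≤ K * ε} := by
  intro ξ hξ
  obtain ⟨a, ha, b, hb, hab, hdist⟩ := exists_ne_dist_lt_of_rho0_lt totallyBounded_Xset hε hξ
  refine ⟨basePoint k.castSucc ξ a, ⟨basePoint_mem_cube ha, ?_⟩, graphProj_basePoint ha⟩
  have hsq := abs_fderiv_apply_sub_le_of_eq (convex_cube n ρ) hΨ hK (basePoint_mem_cube ha)
    (basePoint_mem_cube hb) (apply_basePoint_castSucc_eq ha hb)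
  have hsmul : (Pi.single k (b - a) : Fin n → ℝ) = (b - a) • Pi.single k 1 := by
    rw [← Pi.single_smul', smul_eq_mul, mul_one]
  rw [basePoint_castSucc_sub, Pi.norm_single, hsmul, map_smul, smul_eq_mul, abs_mul,
    ← Real.norm_eq_abs (b - a), sq, mul_left_comm] at hsq
  have hpos : 0 < ‖b - a‖ := norm_pos_iff.2 (sub_ne_zero.2 hab.symm)
  calc |Ψ' (basePoint k.castSucc ξ a) (Pi.single k 1)| ≤ K * ‖b - a‖ :=
        le_of_mul_le_mul_left hsq hpos
    _ ≤ K * ε := by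
      gcongr
      exact (dist_eq_norm b a ▸ dist_comm a b ▸ hdist).le

lemma volume_image_graphProj_le (k : Fin n) {s : Set (Fin n → ℝ)} (hs : IsOpen s)
    (hΨ : ∀ x ∈ s, HasFDerivWithinAt Ψ (Ψ' x) s x) (hΨ' : ContinuousOn Ψ' s) (δ : ℝ) :
    volume (graphProj Ψ k.castSucc '' {x ∈ s | |Ψ' x (Pi.single k 1)| ≤ δ}) ≤
      ENNReal.ofReal δ * volume s := by
  set A := {x ∈ s | |Ψ' x (Pi.single k 1)| ≤ δ}
  have hAs : A ⊆ s := sep_subset s _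
  have hA : MeasurableSet A := by
    have hcont : ContinuousOn (fun x => |Ψ' x (Pi.single k 1)|) s :=
      (hΨ'.clm_apply continuousOn_const).abs
    have hdiff : A = s \ (s ∩ (fun x => |Ψ' x (Pi.single k 1)|) ⁻¹' Ioi δ) := by
      ext x
      simp +contextual [A]
    exact hdiff ▸ hs.measurableSet.diff (hcont.isOpen_inter_preimage hs isOpen_Ioi).measurableSet
  calc volume (graphProj Ψ k.castSucc '' A)
      = volume ((fun x => Function.update x k (Ψ x)) '' A) := volume_image_graphProj_castSucc ..
    _ ≤ ∫⁻ x in A, ENNReal.ofReal |Ψ' x (Pi.single k 1)| :=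
        volume_image_update_self_le k hA fun x hx => (hΨ x hx.1).mono hAs
    _ ≤ ∫⁻ _ in A, ENNReal.ofReal δ :=
        setLIntegral_mono measurable_const fun x hx => ENNReal.ofReal_le_ofReal hx.2
    _ = ENNReal.ofReal δ * volume A := setLIntegral_const ..
    _ ≤ ENNReal.ofReal δ * volume s := by gcongr

theorem measure_Meps_bound_general
    (hΨ : ∀ x ∈ cube n ρ, HasFDerivWithinAt Ψ (Ψ' x) (cube n ρ) x)
    (hK : LipschitzOnWith K Ψ' (cube n ρ)) (l : Fin (n + 1)) (hε : ε ≤ 4 * ρ) :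
    volume {ξ ∈ cube n ρ | rho0 ρ (Xset n ρ Ψ l ξ) < ε} ≤
      ENNReal.ofReal (K * ε) * volume (cube n ρ) := by
  induction l using Fin.lastCases with
  | last =>
    have hempty : {ξ ∈ cube n ρ | rho0 ρ (Xset n ρ Ψ (Fin.last n) ξ) < ε} = ∅ := by
      simp [rho0, subsingleton_Xset_last, hε]
    simp [hempty]
  | cast k =>
    calc volume {ξ ∈ cube n ρ | rho0 ρ (Xset n ρ Ψ k.castSucc ξ) < ε}
        ≤ volume (graphProj Ψ k.castSucc '' {x ∈ cube n ρ | |Ψ' x (Pi.single k 1)| ≤ K * ε}) :=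
          measure_mono fun ξ hξ => setOf_rho0_lt_subset_image_graphProj hΨ hK k hε hξ.2
      _ ≤ ENNReal.ofReal (K * ε) * volume (cube n ρ) :=
          volume_image_graphProj_le k (isOpen_cube n ρ) hΨ hK.continuousOn _

end Measure

/-- For `d = n + 1 ≥ 2` there is a constant `C = C(d)` such that, for every `ρ > 0`,
every `C²` function `Ψ` on the closure of the cube `(−2ρ,2ρ)^{d−1}` with values in
`(−2ρ,2ρ)` and `‖∇²Ψ‖_{L^∞} ≤ M`, every `l`, and every `ε ∈ (0,4ρ)`, the set
`M_ε = {ξ° : ρ₀(ξ°) < ε}` satisfies `|M_ε| ≤ C ε ρ^{d−2} (1 + ρ M)`. -/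
theorem measure_Meps_bound (n : ℕ) (hn : 1 ≤ n) :
    ∃ C : ℝ, ∀ ρ : ℝ, 0 < ρ → ∀ Ψ : (Fin n → ℝ) → ℝ,
      ContDiffOn ℝ 2 Ψ (closure (cube n ρ)) →
      (∀ x ∈ closure (cube n ρ), Ψ x ∈ Set.Ioo (-(2 * ρ)) (2 * ρ)) →
      ∀ M : ℝ,
      (∀ x ∈ closure (cube n ρ),
        ‖iteratedFDerivWithin ℝ 2 Ψ (closure (cube n ρ)) x‖ ≤ M) →
      ∀ l : Fin (n + 1), ∀ ε : ℝ, 0 < ε → ε < 4 * ρ →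
        volume {ξ ∈ cube n ρ | rho0 ρ (Xset n ρ Ψ l ξ) < ε}
          ≤ ENNReal.ofReal (C * ε * ρ ^ (n - 1) * (1 + ρ * M)) := by
  refine ⟨4 ^ n, fun ρ hρ Ψ hΨ _ M hM l ε hε hερ => ?_⟩
  lift M to ℝ≥0 using (norm_nonneg _).trans (hM 0 (subset_closure (zero_mem_cube n hρ)))
  have hderiv : ∀ x ∈ cube n ρ, HasFDerivWithinAt Ψ
      (fderivWithin ℝ Ψ (closure (cube n ρ)) x) (cube n ρ) x := fun x hx =>
    (hΨ.differentiableOn two_ne_zero x (subset_closure hx)).hasFDerivWithinAt.mono subset_closure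
  have hlip : LipschitzOnWith M (fderivWithin ℝ Ψ (closure (cube n ρ))) (cube n ρ) :=
    (lipschitzOnWith_fderivWithin_of_norm_iteratedFDerivWithin_le (convex_cube n ρ).closure
      (uniqueDiffOn_closure_cube n hρ) hΨ hM).mono subset_closure
  calc volume {ξ ∈ cube n ρ | rho0 ρ (Xset n ρ Ψ l ξ) < ε}
      ≤ ENNReal.ofReal (M * ε) * volume (cube n ρ) :=
        measure_Meps_bound_general hderiv hlip l hερ.le
    _ = ENNReal.ofReal (4 ^ n * ε * ρ ^ (n - 1) * (ρ * M)) := by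
        rw [volume_cube, ← ENNReal.ofReal_pow (by positivity), ← ENNReal.ofReal_mul (by positivity),
          mul_pow, ← pow_sub_one_mul (Nat.one_le_iff_ne_zero.1 hn) ρ]
        ring_nf
    _ ≤ ENNReal.ofReal (4 ^ n * ε * ρ ^ (n - 1) * (1 + ρ * M)) := by
        gcongr
        exact le_add_of_nonneg_left zero_le_one
end

section
/- Let d ≥ 2, ρ > 0, let Ψ be a C² function on the closure of the cube C_ρ^{(d−1)} = (−2ρ,2ρ)^{d−1} with values in (−2ρ,2ρ), and fix l ∈ {1,…,d−1}. Then for every continuous function u : [−2ρ,2ρ]^d → [0,∞), ∫_{C_ρ^{(d−1)}} ( Σ_{t ∈ X_l(ξ°)} u(ξ° with t inserted as l-th coordinate) ) dξ° = ∫_{C_ρ^{(d−1)}} u(ξ̂, Ψ(ξ̂)) · |∂_{ξ_l} Ψ(ξ̂)| dξ̂, where both sides are interpreted in [0,∞] (the inner sum being +∞ if X_l(ξ°) is infinite and the series diverges). -/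
open MeasureTheory Set

/-!
Let `Ξ ξ̂` be the point whose coordinates are those of `ξ̂` other than the `l`-th, followed by
`Ψ ξ̂`. Up to a permutation of coordinates, `Ξ` overwrites the `l`-th coordinate of `ξ̂` with
`Ψ ξ̂`. The derivative of this map is a rank-one perturbation of the identity, of determinant
`∂_l Ψ`, and its fiber over `ξ°` is parametrized by `X_l(ξ°)` through the `l`-th coordinate, so the
claim is the area formula for `Ξ`. The area formula itself reduces to the injective change of
variables: the regular points split into countably many measurable pieces on which the map is
injective, while the critical points have null image by Sard's theorem and vanishing Jacobian.
-/

open scoped ENNReal NNReal Function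

section FiberSum

variable {α β : Type*}

/-- The sum of the weight `g` over the fiber of `F : s → β` at `y`; for `g = 1` this is the
multiplicity function (Banach indicatrix) of `F` on `s`. -/
noncomputable def fiberSum (F : α → β) (s : Set α) (g : α → ℝ≥0∞) (y : β) : ℝ≥0∞ :=
  ∑' x : ↥(s ∩ F ⁻¹' {y}), g x

variable {F : α → β} {s t : Set α} {g : α → ℝ≥0∞}

theorem fiberSum_of_notMem_image {y : β} (hy : y ∉ F '' s) : fiberSum F s g y = 0 := by
  have : IsEmpty ↥(s ∩ F ⁻¹' {y}) := ⟨fun x => hy ⟨x, x.2⟩⟩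
  exact tsum_empty

theorem fiberSum_apply_of_injOn (hF : InjOn F s) {x : α} (hx : x ∈ s) :
    fiberSum F s g (F x) = g x := by
  have hfiber : s ∩ F ⁻¹' {F x} = {x} :=
    Subset.antisymm (fun _ hz => hF hz.1 hx hz.2) (singleton_subset_iff.2 ⟨hx, rfl⟩)
  rw [fiberSum, hfiber, tsum_singleton x g]

theorem fiberSum_eq_indicator_of_injOn [Nonempty α] (hF : InjOn F s) :
    fiberSum F s g = (F '' s).indicator (g ∘ Function.invFunOn F s) := by
  funext y
  by_cases hy : y ∈ F '' s
  · obtain ⟨x, hx, rfl⟩ := hy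
    rw [fiberSum_apply_of_injOn hF hx, indicator_of_mem (mem_image_of_mem F hx),
      Function.comp_apply, hF.leftInvOn_invFunOn hx]
  · rw [fiberSum_of_notMem_image hy, indicator_of_notMem hy]

theorem fiberSum_iUnion {ι : Type*} {t : ι → Set α} (ht : Pairwise (Disjoint on t)) (y : β) :
    fiberSum F (⋃ i, t i) g y = ∑' i, fiberSum F (t i) g y := by
  unfold fiberSum
  rw [iUnion_inter]
  exact ENNReal.tsum_biUnion fun i _ j _ hij =>
    (ht hij).mono inter_subset_left inter_subset_left

theorem fiberSum_eq_of_notMem_image_sdiff (hts : t ⊆ s) {y : β} (hy : y ∉ F '' (s \ t)) :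
    fiberSum F s g y = fiberSum F t g y := by
  have hfiber : s ∩ F ⁻¹' {y} = t ∩ F ⁻¹' {y} :=
    Subset.antisymm (fun x hx => ⟨by_contra fun hxt => hy ⟨x, ⟨hx.1, hxt⟩, hx.2⟩, hx.2⟩)
      (inter_subset_inter_left _ hts)
  rw [fiberSum, hfiber, fiberSum]

end FiberSum

section AreaFormula

variable {E : Type*} [NormedAddCommGroup E] [NormedSpace ℝ E] [FiniteDimensional ℝ E]
  {F : E → E} {F' : E → E →L[ℝ] E} {s : Set E} {g : E → ℝ≥0∞}

theorem exists_forall_approximatesLinearOn_injOn {A : E →L[ℝ] E} (hA : A.det ≠ 0) :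
    ∃ r : ℝ≥0, r ≠ 0 ∧ ∀ (F : E → E) (t : Set E), ApproximatesLinearOn F A t r → InjOn F t := by
  obtain ⟨B, rfl⟩ : ∃ B : E ≃L[ℝ] E, (B : E →L[ℝ] E) = A :=
    ⟨_, A.coe_toContinuousLinearEquivOfDetNeZero hA⟩
  rcases B.subsingleton_or_nnnorm_symm_pos with hE | hpos
  · exact ⟨1, one_ne_zero, fun F t ht => ht.injOn (Or.inl hE)⟩
  · have hinv : ‖(B.symm : E →L[ℝ] E)‖₊⁻¹ ≠ 0 := inv_ne_zero hpos.ne'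
    exact ⟨_, (half_pos hinv.bot_lt).ne', fun F t ht =>
      ht.injOn (Or.inr (NNReal.half_lt_self hinv))⟩

variable [MeasurableSpace E] [BorelSpace E]

theorem exists_measurable_partition_injOn (hF : ∀ x ∈ s, HasFDerivWithinAt F (F' x) s x)
    (hdet : ∀ x ∈ s, (F' x).det ≠ 0) :
    ∃ t : ℕ → Set E, Pairwise (Disjoint on t) ∧ (∀ i, MeasurableSet (t i)) ∧ s ⊆ ⋃ i, t i ∧
      ∀ i, InjOn F (s ∩ t i) := by
  rcases s.eq_empty_or_nonempty with rfl | hs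
  · exact ⟨fun _ => ∅, fun _ _ _ => disjoint_empty _, fun _ => .empty, empty_subset _, by simp⟩
  have hradius (A : E →L[ℝ] E) : ∃ r : ℝ≥0, r ≠ 0 ∧
      (A.det ≠ 0 → ∀ t : Set E, ApproximatesLinearOn F A t r → InjOn F t) := by
    by_cases hA : A.det = 0
    · exact ⟨1, one_ne_zero, fun h => absurd hA h⟩
    · obtain ⟨r, hr₀, hr⟩ := exists_forall_approximatesLinearOn_injOn hA
      exact ⟨r, hr₀, fun _ => hr F⟩
  choose r hr₀ hr using hradius
  obtain ⟨t, A, hdisj, hmeas, hcover, happrox, hA⟩ :=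
    exists_partition_approximatesLinearOn_of_hasFDerivWithinAt F s F' hF r hr₀
  refine ⟨t, hdisj, hmeas, hcover, fun i => hr (A i) ?_ _ (happrox i)⟩
  obtain ⟨x, hx, hAx⟩ := hA hs i
  exact hAx ▸ hdet x hx

variable {μ : Measure E} [μ.IsAddHaarMeasure]

theorem lintegral_fiberSum_of_injOn (hs : MeasurableSet s)
    (hF : ∀ x ∈ s, HasFDerivWithinAt F (F' x) s x) (hinj : InjOn F s) :
    ∫⁻ y, fiberSum F s g y ∂μ = ∫⁻ x in s, ENNReal.ofReal |(F' x).det| * g x ∂μ := by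
  rw [fiberSum_eq_indicator_of_injOn hinj,
    lintegral_indicator (measurable_image_of_fderivWithin hs hF hinj),
    lintegral_image_eq_lintegral_abs_det_fderiv_mul μ hs hF hinj]
  refine setLIntegral_congr_fun hs fun x hx => ?_
  simp only [Function.comp_apply, hinj.leftInvOn_invFunOn hx]

theorem aemeasurable_fiberSum_of_injOn (hs : MeasurableSet s)
    (hF : ∀ x ∈ s, HasFDerivWithinAt F (F' x) s x) (hinj : InjOn F s)
    (hg : AEMeasurable g (μ.restrict s)) : AEMeasurable (fiberSum F s g) μ := by
  rw [fiberSum_eq_indicator_of_injOn hinj,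
    aemeasurable_indicator_iff (measurable_image_of_fderivWithin hs hF hinj),
    ← restrict_map_withDensity_abs_det_fderiv_eq_addHaar μ hs hF hinj,
    (measurableEmbedding_of_fderivWithin hs hF hinj).aemeasurable_map_iff]
  have hcomp : (g ∘ Function.invFunOn F s) ∘ s.domRestrict F = g ∘ ((↑) : s → E) :=
    funext fun x => congrArg g (hinj.leftInvOn_invFunOn x.2)
  rw [hcomp, ← (MeasurableEmbedding.subtype_coe hs).aemeasurable_map_iff,
    map_comap_subtype_coe hs]
  exact hg.mono_ac ((withDensity_absolutelyContinuous μ _).restrict s)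

theorem lintegral_fiberSum_of_det_ne_zero (hs : MeasurableSet s)
    (hF : ∀ x ∈ s, HasFDerivWithinAt F (F' x) s x) (hdet : ∀ x ∈ s, (F' x).det ≠ 0)
    (hg : AEMeasurable g (μ.restrict s)) :
    ∫⁻ y, fiberSum F s g y ∂μ = ∫⁻ x in s, ENNReal.ofReal |(F' x).det| * g x ∂μ := by
  obtain ⟨t, hdisj, hmeas, hcover, hinj⟩ := exists_measurable_partition_injOn hF hdet
  have hsub (i : ℕ) : s ∩ t i ⊆ s := inter_subset_left
  have hpiece (i : ℕ) : MeasurableSet (s ∩ t i) := hs.inter (hmeas i)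
  have hderiv (i : ℕ) : ∀ x ∈ s ∩ t i, HasFDerivWithinAt F (F' x) (s ∩ t i) x :=
    fun x hx => (hF x hx.1).mono (hsub i)
  have hpdisj : Pairwise (Disjoint on fun i => s ∩ t i) :=
    fun i j hij => (hdisj hij).mono inter_subset_right inter_subset_right
  have hunion : s = ⋃ i, s ∩ t i := by rw [← inter_iUnion, inter_eq_left.2 hcover]
  calc ∫⁻ y, fiberSum F s g y ∂μ
      = ∫⁻ y, ∑' i, fiberSum F (s ∩ t i) g y ∂μ := by
        simp only [← fiberSum_iUnion hpdisj, ← hunion]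
    _ = ∑' i, ∫⁻ y, fiberSum F (s ∩ t i) g y ∂μ :=
        lintegral_tsum fun i => aemeasurable_fiberSum_of_injOn (hpiece i) (hderiv i) (hinj i)
          (hg.mono_set (hsub i))
    _ = ∑' i, ∫⁻ x in s ∩ t i, ENNReal.ofReal |(F' x).det| * g x ∂μ :=
        tsum_congr fun i => lintegral_fiberSum_of_injOn (hpiece i) (hderiv i) (hinj i)
    _ = ∫⁻ x in s, ENNReal.ofReal |(F' x).det| * g x ∂μ := by
        rw [← lintegral_iUnion hpiece hpdisj, ← hunion]

theorem nullMeasurableSet_det_ne_zero (hs : MeasurableSet s)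
    (hF : ∀ x ∈ s, HasFDerivWithinAt F (F' x) s x) :
    NullMeasurableSet (s ∩ {x | (F' x).det ≠ 0}) μ := by
  have hdet : AEMeasurable (fun x => (F' x).det) (μ.restrict s) :=
    ContinuousLinearMap.continuous_det.measurable.comp_aemeasurable
      (aemeasurable_fderivWithin μ hs hF)
  rw [inter_comm, ← nullMeasurableSet_restrict hs.nullMeasurableSet]
  exact hdet.nullMeasurable (measurableSet_singleton 0).compl

theorem addHaar_image_eq_zero_of_ae_det_eq_zero (hF : ∀ x ∈ s, HasFDerivWithinAt F (F' x) s x)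
    (hdet : ∀ᵐ x ∂μ, x ∈ s → (F' x).det = 0) : μ (F '' s) = 0 := by
  have hcrit : μ (F '' (s ∩ {x | (F' x).det = 0})) = 0 :=
    addHaar_image_eq_zero_of_det_fderivWithin_eq_zero μ
      (fun x hx => (hF x hx.1).mono inter_subset_left) fun _ hx => hx.2
  have hreg : μ (F '' (s \ {x | (F' x).det = 0})) = 0 := by
    refine addHaar_image_eq_zero_of_differentiableOn_of_addHaar_eq_zero μ
      (fun x hx => ((hF x hx.1).mono sdiff_subset).differentiableWithinAt) ?_
    exact measure_eq_zero_iff_ae_notMem.2 (hdet.mono fun x hx hxs => hxs.2 (hx hxs.1))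
  rw [← inter_union_sdiff s {x | (F' x).det = 0}, image_union]
  exact measure_union_null hcrit hreg

theorem lintegral_fiberSum (hs : MeasurableSet s)
    (hF : ∀ x ∈ s, HasFDerivWithinAt F (F' x) s x) (hg : AEMeasurable g (μ.restrict s)) :
    ∫⁻ y, fiberSum F s g y ∂μ = ∫⁻ x in s, ENNReal.ofReal |(F' x).det| * g x ∂μ := by
  obtain ⟨t, htreg, ht, htae⟩ :=
    (nullMeasurableSet_det_ne_zero (μ := μ) hs hF).exists_measurable_subset_ae_eq
  have hts : t ⊆ s := htreg.trans inter_subset_left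
  have hcrit : ∀ᵐ x ∂μ, x ∈ s \ t → (F' x).det = 0 := by
    filter_upwards [htae.mem_iff] with x hx hxs
    exact by_contra fun hne => hxs.2 (hx.2 ⟨hxs.1, hne⟩)
  have hnull : μ (F '' (s \ t)) = 0 :=
    addHaar_image_eq_zero_of_ae_det_eq_zero
      (fun x hx => (hF x hx.1).mono sdiff_subset) hcrit
  have hzero : ∫⁻ x in s \ t, ENNReal.ofReal |(F' x).det| * g x ∂μ = 0 := by
    rw [setLIntegral_congr_fun_ae (g := 0) (hs.diff ht)
      (hcrit.mono fun x hx hxs => by simp [hx hxs])]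
    exact lintegral_zero
  calc ∫⁻ y, fiberSum F s g y ∂μ
      = ∫⁻ y, fiberSum F t g y ∂μ :=
        lintegral_congr_ae <| (measure_eq_zero_iff_ae_notMem.1 hnull).mono fun _ hy =>
          fiberSum_eq_of_notMem_image_sdiff hts hy
    _ = ∫⁻ x in t, ENNReal.ofReal |(F' x).det| * g x ∂μ :=
        lintegral_fiberSum_of_det_ne_zero ht (fun x hx => (hF x (hts hx)).mono hts)
          (fun x hx => (htreg hx).2) (hg.mono_set hts)
    _ = ∫⁻ x in s, ENNReal.ofReal |(F' x).det| * g x ∂μ := by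
        rw [← lintegral_inter_add_sdiff _ s ht, inter_eq_right.2 hts, hzero, add_zero]

end AreaFormula

section Update

open Function (update)

theorem inter_preimage_update_singleton {ι α : Type*} [DecidableEq ι] (Ψ : (ι → α) → α)
    (Ω : Set (ι → α)) (l : ι) (y : ι → α) :
    Ω ∩ (fun x => update x l (Ψ x)) ⁻¹' {y} =
      update y l '' {t | update y l t ∈ Ω ∧ Ψ (update y l t) = y l} := by
  ext x
  constructor
  · rintro ⟨hx, rfl⟩
    exact ⟨x l, by simpa using hx, by simp⟩
  · rintro ⟨t, ⟨ht, hΨ⟩, rfl⟩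
    exact ⟨ht, by simp [hΨ]⟩

theorem fiberSum_update {ι α : Type*} [DecidableEq ι] (Ψ : (ι → α) → α) (Ω : Set (ι → α))
    (l : ι) (g : (ι → α) → ℝ≥0∞) (y : ι → α) :
    fiberSum (fun x => update x l (Ψ x)) Ω g y =
      ∑' t : {t | update y l t ∈ Ω ∧ Ψ (update y l t) = y l}, g (update y l t) := by
  rw [fiberSum, inter_preimage_update_singleton,
    tsum_image g (Function.update_injective y l).injOn]

variable {ι : Type*} [DecidableEq ι]

theorem hasFDerivWithinAt_update_self_s16 [Finite ι] {𝕜 : Type*} [NontriviallyNormedField 𝕜]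
    {Ψ : (ι → 𝕜) → 𝕜} {Ψ' : (ι → 𝕜) →L[𝕜] 𝕜} {s : Set (ι → 𝕜)} {x : ι → 𝕜}
    (hΨ : HasFDerivWithinAt Ψ Ψ' s x) (l : ι) :
    HasFDerivWithinAt (fun x => update x l (Ψ x))
      (.id 𝕜 (ι → 𝕜) + (Ψ' - .proj l).smulRight (Pi.single l 1)) s x := by
  cases nonempty_fintype ι
  have hupdate : (fun x => update x l (Ψ x)) = fun x => x + (Ψ x - x l) • Pi.single l 1 := by
    funext x i
    rcases eq_or_ne i l with rfl | hi <;> simp [*]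
  rw [hupdate]
  exact (hasFDerivWithinAt_id x s).add
    ((hΨ.fun_sub (hasFDerivWithinAt_apply l x s)).smul_const _)

theorem det_id_add_smulRight_single [Finite ι] {𝕜 : Type*} [NontriviallyNormedField 𝕜]
    (ψ : (ι → 𝕜) →L[𝕜] 𝕜) (l : ι) :
    (.id 𝕜 (ι → 𝕜) + (ψ - .proj l).smulRight (Pi.single l 1) : (ι → 𝕜) →L[𝕜] (ι → 𝕜)).det =
      ψ (Pi.single l 1) := by
  have hdet := LinearMap.transvection.det
    ((ψ - .proj l : (ι → 𝕜) →L[𝕜] 𝕜) : (ι → 𝕜) →ₗ[𝕜] 𝕜) (Pi.single l 1)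
  exact hdet.trans (by simp)

theorem lintegral_fiberSum_update [Fintype ι] {Ψ : (ι → ℝ) → ℝ}
    {Ψ' : (ι → ℝ) → (ι → ℝ) →L[ℝ] ℝ} {Ω : Set (ι → ℝ)} (hΩ : MeasurableSet Ω)
    (hΨ : ∀ x ∈ Ω, HasFDerivWithinAt Ψ (Ψ' x) Ω x) (l : ι) {g : (ι → ℝ) → ℝ≥0∞}
    (hg : AEMeasurable g (volume.restrict Ω)) :
    ∫⁻ y, fiberSum (fun x => update x l (Ψ x)) Ω g y =
      ∫⁻ x in Ω, ENNReal.ofReal |Ψ' x (Pi.single l 1)| * g x := by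
  rw [lintegral_fiberSum hΩ (fun x hx => hasFDerivWithinAt_update_self_s16 (hΨ x hx) l) hg]
  simp only [det_id_add_smulRight_single]

end Update

section MoveLast

variable {m : ℕ}

/-- The cyclic permutation of coordinates moving the last coordinate to position `l`. It turns
`ξ°`, in which the coordinates are indexed as in `Fin.succAbove`, into the point obtained from
`ξ̂` by overwriting its `l`-th coordinate with `Ψ ξ̂`. -/
def moveLastTo (l : Fin (m + 1)) : (Fin (m + 1) → ℝ) ≃ᵐ (Fin (m + 1) → ℝ) :=
  (MeasurableEquiv.piFinSuccAbove (fun _ => ℝ) (Fin.last m)).trans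
    (MeasurableEquiv.piFinSuccAbove (fun _ => ℝ) l).symm

theorem moveLastTo_apply (l : Fin (m + 1)) (ξ : Fin (m + 1) → ℝ) :
    moveLastTo l ξ = l.insertNth (ξ (Fin.last m)) (Fin.init ξ) := by
  simp only [moveLastTo, MeasurableEquiv.trans_apply, MeasurableEquiv.piFinSuccAbove_apply,
    MeasurableEquiv.piFinSuccAbove_symm_apply, Fin.insertNthEquiv_last]
  rfl

theorem measurePreserving_moveLastTo (l : Fin (m + 1)) : MeasurePreserving (moveLastTo l) :=
  (volume_preserving_piFinSuccAbove (fun _ => ℝ) (Fin.last m)).trans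
    (volume_preserving_piFinSuccAbove (fun _ => ℝ) l).symm

theorem insertNth_castSucc_eq_snoc (l : Fin (m + 1)) (t : ℝ) (ξ : Fin (m + 1) → ℝ) :
    l.castSucc.insertNth (α := fun _ => ℝ) t ξ =
      Fin.snoc (α := fun _ => ℝ) (Function.update (moveLastTo l ξ) l t) (moveLastTo l ξ l) := by
  rw [moveLastTo_apply, Fin.update_insertNth, Fin.insertNth_apply_same, Fin.insertNth_eq_iff]
  refine ⟨by simp, funext fun j => ?_⟩
  induction j using Fin.lastCases with
  | last => simp [Fin.removeNth]
  | cast j => simp [Fin.removeNth, Fin.init]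

end MoveLast

section Cube

variable {n : ℕ} {ρ : ℝ}

theorem measurableSet_cube : MeasurableSet (cube n ρ) :=
  .univ_pi fun _ => measurableSet_Ioo

theorem snoc_mem_cube_iff {x : Fin n → ℝ} {a : ℝ} :
    Fin.snoc (α := fun _ => ℝ) x a ∈ cube (n + 1) ρ ↔
      x ∈ cube n ρ ∧ a ∈ Ioo (-(2 * ρ)) (2 * ρ) := by
  simp [cube, Fin.forall_fin_succ']

variable {Ψ : (Fin n → ℝ) → ℝ}

theorem snoc_mem_graphSurface_iff (hmaps : MapsTo Ψ (cube n ρ) (Ioo (-(2 * ρ)) (2 * ρ)))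
    {x : Fin n → ℝ} {a : ℝ} :
    Fin.snoc (α := fun _ => ℝ) x a ∈ graphSurface n ρ Ψ ↔ x ∈ cube n ρ ∧ Ψ x = a := by
  have hgraph : Fin.snoc (α := fun _ => ℝ) x a ∈ graphSurface n ρ Ψ ↔
      Fin.snoc (α := fun _ => ℝ) x a ∈ cube (n + 1) ρ ∧ a = Ψ x := by
    simp [graphSurface, cube]
  rw [hgraph, snoc_mem_cube_iff]
  constructor
  · rintro ⟨⟨hx, -⟩, rfl⟩
    exact ⟨hx, rfl⟩
  · rintro ⟨hx, rfl⟩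
    exact ⟨⟨hx, hmaps hx⟩, rfl⟩

theorem Xset_eq_empty_of_notMem_cube {l : Fin (n + 1)} {ξ : Fin n → ℝ} (hξ : ξ ∉ cube n ρ) :
    Xset n ρ Ψ l ξ = ∅ := by
  refine eq_empty_of_forall_notMem fun t ht => hξ fun j _ => ?_
  simpa using ht.2.1 (l.succAbove j)

theorem tsum_Xset_eq_fiberSum {m : ℕ} {Ψ : (Fin (m + 1) → ℝ) → ℝ}
    (hmaps : MapsTo Ψ (cube (m + 1) ρ) (Ioo (-(2 * ρ)) (2 * ρ))) (l : Fin (m + 1))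
    (u : (Fin (m + 2) → ℝ) → ℝ≥0∞) (ξ : Fin (m + 1) → ℝ) :
    ∑' t : Xset (m + 1) ρ Ψ l.castSucc ξ, u (l.castSucc.insertNth (t : ℝ) ξ) =
      fiberSum (fun x => Function.update x l (Ψ x)) (cube (m + 1) ρ)
        (fun x => u (Fin.snoc x (Ψ x))) (moveLastTo l ξ) := by
  have hX : Xset (m + 1) ρ Ψ l.castSucc ξ = {t | Function.update (moveLastTo l ξ) l t ∈
      cube (m + 1) ρ ∧ Ψ (Function.update (moveLastTo l ξ) l t) = moveLastTo l ξ l} := by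
    ext t
    rw [Xset, mem_ofPred_eq, insertNth_castSucc_eq_snoc, snoc_mem_graphSurface_iff hmaps]
    exact and_iff_right_of_imp fun ht => by simpa using ht.1 l (mem_univ l)
  rw [fiberSum_update, hX]
  refine tsum_congr fun t => ?_
  rw [t.2.2, insertNth_castSucc_eq_snoc]

theorem aemeasurable_comp_snoc_of_continuousOn (hΨ : ContinuousOn Ψ (cube n ρ))
    (hmaps : MapsTo Ψ (cube n ρ) (Ioo (-(2 * ρ)) (2 * ρ))) {u : (Fin (n + 1) → ℝ) → ℝ}
    (hu : ContinuousOn u (cube (n + 1) ρ)) :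
    AEMeasurable (fun x => u (Fin.snoc x (Ψ x))) (volume.restrict (cube n ρ)) :=
  (hu.comp (continuousOn_id.finSnoc hΨ) fun _ hx =>
    snoc_mem_cube_iff.2 ⟨hx, hmaps hx⟩).aemeasurable measurableSet_cube

end Cube

theorem graph_change_of_variables_general {n : ℕ} {ρ : ℝ} {Ψ : (Fin n → ℝ) → ℝ}
    {Ψ' : (Fin n → ℝ) → (Fin n → ℝ) →L[ℝ] ℝ}
    (hΨ : ∀ x ∈ cube n ρ, HasFDerivWithinAt Ψ (Ψ' x) (cube n ρ) x)
    (hmaps : MapsTo Ψ (cube n ρ) (Ioo (-(2 * ρ)) (2 * ρ))) (l : Fin n)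
    {u : (Fin (n + 1) → ℝ) → ℝ≥0∞}
    (hu : AEMeasurable (fun x => u (Fin.snoc x (Ψ x))) (volume.restrict (cube n ρ))) :
    ∫⁻ ξ in cube n ρ, ∑' t : Xset n ρ Ψ l.castSucc ξ, u (l.castSucc.insertNth (t : ℝ) ξ) =
      ∫⁻ ξ in cube n ρ,
        u (Fin.snoc ξ (Ψ ξ)) * ENNReal.ofReal |Ψ' ξ (Pi.single l 1)| := by
  obtain _ | m := n
  · exact l.elim0
  let S := fiberSum (fun x => Function.update x l (Ψ x)) (cube (m + 1) ρ)
    fun x => u (Fin.snoc x (Ψ x))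
  calc ∫⁻ ξ in cube (m + 1) ρ,
        ∑' t : Xset (m + 1) ρ Ψ l.castSucc ξ, u (l.castSucc.insertNth (t : ℝ) ξ)
      = ∫⁻ ξ, ∑' t : Xset (m + 1) ρ Ψ l.castSucc ξ, u (l.castSucc.insertNth (t : ℝ) ξ) :=
        setLIntegral_eq_of_support_subset <|
          Function.support_subset_iff'.2 fun ξ hξ => by
            simp [Xset_eq_empty_of_notMem_cube hξ]
    _ = ∫⁻ ξ, S (moveLastTo l ξ) := lintegral_congr (tsum_Xset_eq_fiberSum hmaps l u)
    _ = ∫⁻ y, S y :=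
        (measurePreserving_moveLastTo l).lintegral_comp_emb (moveLastTo l).measurableEmbedding S
    _ = ∫⁻ ξ in cube (m + 1) ρ,
          u (Fin.snoc ξ (Ψ ξ)) * ENNReal.ofReal |Ψ' ξ (Pi.single l 1)| := by
        simpa only [mul_comm] using lintegral_fiberSum_update measurableSet_cube hΨ l hu

/-- Change-of-variables (area) formula on the graph of `Ψ`: for `d = n + 1 ≥ 2`,
`l ∈ {1,…,d−1}`, and every nonnegative continuous `u` on `[−2ρ,2ρ]^d`,
`∫_{(−2ρ,2ρ)^{d−1}} Σ_{t ∈ X_l(ξ°)} u(ξ° with t inserted as l-th coordinate) dξ°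
  = ∫_{(−2ρ,2ρ)^{d−1}} u(ξ̂, Ψ(ξ̂)) |∂_{ξ_l}Ψ(ξ̂)| dξ̂`,
both sides interpreted in `[0,∞]`. -/
theorem graph_change_of_variables (n : ℕ) (hn : 1 ≤ n) (ρ : ℝ) (hρ : 0 < ρ)
    (Ψ : (Fin n → ℝ) → ℝ)
    (hΨ : ContDiffOn ℝ 2 Ψ (closure (cube n ρ)))
    (hmaps : ∀ x ∈ closure (cube n ρ), Ψ x ∈ Set.Ioo (-(2 * ρ)) (2 * ρ))
    (l : Fin n)
    (u : (Fin (n + 1) → ℝ) → ℝ)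
    (hu : ContinuousOn u (closure (cube (n + 1) ρ)))
    (hupos : ∀ ξ ∈ closure (cube (n + 1) ρ), 0 ≤ u ξ) :
    (∫⁻ ξ in cube n ρ,
        ∑' t : Xset n ρ Ψ l.castSucc ξ,
          ENNReal.ofReal (u ((l.castSucc).insertNth (t : ℝ) ξ)))
      = ∫⁻ ξ in cube n ρ,
          ENNReal.ofReal (u (Fin.snoc ξ (Ψ ξ))) *
          ENNReal.ofReal |fderivWithin ℝ Ψ (closure (cube n ρ)) ξ (Pi.single l 1)| := by
  have hmaps' : MapsTo Ψ (cube n ρ) (Ioo (-(2 * ρ)) (2 * ρ)) :=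
    fun x hx => hmaps x (subset_closure hx)
  exact graph_change_of_variables_general (u := fun ξ => ENNReal.ofReal (u ξ))
    (fun x hx => (hΨ.differentiableOn two_ne_zero x (subset_closure hx)).hasFDerivWithinAt.mono
      subset_closure)
    hmaps' l (aemeasurable_comp_snoc_of_continuousOn (hΨ.continuousOn.mono subset_closure) hmaps'
      (hu.mono subset_closure)).ennreal_ofReal
end
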